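/- arXiv:1009.3430 — 3 statements merged into one kernel-verified Lean document; each statement's English description precedes it below -/
import Mathlib

section
/- Let G and G' be simple undirected graphs on the same vertex set {1, …, N} with adjacency matrices A and A', such that every edge of G is an edge of G' and G' has at least one edge not in G (i.e., the edge set of G is strictly contained in that of G'). Then trace(exp(A)) < trace(exp(A')); equivalently, the natural connectivity strictly increases under the addition of edges. -/
/-!
Since `trace (exp A) = ∑ₖ trace (A ^ k) / k!`, it suffices to compare the traces of powers.
Adding edges increases the adjacency matrix entrywise, and entrywise inequalities between
nonnegative matrices pass to powers, so no term of the series decreases. The term `k = 2` strictly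
increases, because `trace (A ^ 2)` is the sum of the degrees, i.e. twice the number of edges.
-/

open scoped Nat

section Matrix

variable {n R : Type*} [Fintype n] [DecidableEq n]

theorem hasSum_trace_exp {𝕂 : Type*} [NontriviallyNormedField 𝕂] [CharZero 𝕂] [ContinuousSMul ℚ 𝕂]
    [NormedRing R] [NormedAlgebra 𝕂 R] [CompleteSpace R] (A : Matrix n n R) :
    HasSum (fun k : ℕ ↦ (k !⁻¹ : 𝕂) • (A ^ k).trace) (NormedSpace.exp A).trace := by
  have exp_series : HasSum (fun k : ℕ ↦ (k !⁻¹ : 𝕂) • A ^ k) (NormedSpace.exp A) := by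
    let : NormedRing (Matrix n n R) := Matrix.linftyOpNormedRing
    let : NormedAlgebra 𝕂 (Matrix n n R) := Matrix.linftyOpNormedAlgebra
    -- Unannotated, `CompleteSpace` would refer to the entrywise uniformity, which instance search
    -- does not identify with the one induced by the norm.
    have : @CompleteSpace (Matrix n n R) PseudoMetricSpace.toUniformSpace :=
      inferInstanceAs (CompleteSpace (n → n → R))
    exact NormedSpace.exp_series_hasSum_exp' A
  simpa only [Function.comp_def, Matrix.traceAddMonoidHom_apply, Matrix.trace_smul] using
    exp_series.map (Matrix.traceAddMonoidHom n R) continuous_id.matrix_trace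

theorem matrix_pow_apply_le_pow_apply [Semiring R] [PartialOrder R] [IsOrderedRing R]
    {A B : Matrix n n R} (hA : ∀ i j, 0 ≤ A i j) (hAB : ∀ i j, A i j ≤ B i j) (k : ℕ) (i j : n) :
    (A ^ k) i j ≤ (B ^ k) i j := by
  induction k generalizing i j with
  | zero => simp only [pow_zero, le_refl]
  | succ k ih =>
    have hB : ∀ i j, 0 ≤ B i j := fun i j ↦ (hA i j).trans (hAB i j)
    simp only [pow_succ, Matrix.mul_apply]
    exact Finset.sum_le_sum fun l _ ↦
      mul_le_mul (ih i l) (hAB l j) (hA l j) (Matrix.pow_apply_nonneg hB k i l)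

theorem trace_exp_lt_trace_exp {A B : Matrix n n ℝ} (hA : ∀ i j, 0 ≤ A i j)
    (hAB : ∀ i j, A i j ≤ B i j) {k : ℕ} (hk : (A ^ k).trace < (B ^ k).trace) :
    (NormedSpace.exp A).trace < (NormedSpace.exp B).trace := by
  have trace_pow_le (m : ℕ) : (A ^ m).trace ≤ (B ^ m).trace :=
    Finset.sum_le_sum fun i _ ↦ matrix_pow_apply_le_pow_apply hA hAB m i i
  refine hasSum_lt (i := k) (fun m ↦ ?_) ?_
    (hasSum_trace_exp (𝕂 := ℝ) A) (hasSum_trace_exp (𝕂 := ℝ) B)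
  · exact smul_le_smul_of_nonneg_left (trace_pow_le m) (by positivity)
  · exact smul_lt_smul_of_pos_left hk (by positivity)

end Matrix

section Graph

variable {V R : Type*}

theorem adjMatrix_apply_nonneg [Zero R] [One R] [Preorder R] [ZeroLEOneClass R]
    (G : SimpleGraph V) [DecidableRel G.Adj] (v w : V) : 0 ≤ G.adjMatrix R v w := by
  rw [SimpleGraph.adjMatrix_apply]
  split_ifs
  exacts [zero_le_one, le_rfl]

theorem adjMatrix_apply_le_adjMatrix_apply [Zero R] [One R] [Preorder R] [ZeroLEOneClass R]
    {G G' : SimpleGraph V} [DecidableRel G.Adj] [DecidableRel G'.Adj] (h : G ≤ G') (v w : V) :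
    G.adjMatrix R v w ≤ G'.adjMatrix R v w := by
  by_cases hG : G.Adj v w
  · simp only [SimpleGraph.adjMatrix_apply, hG, h hG, if_true, le_refl]
  · simpa only [SimpleGraph.adjMatrix_apply, hG, if_false] using adjMatrix_apply_nonneg G' v w

theorem trace_adjMatrix_sq [Fintype V] [DecidableEq V] [Semiring R]
    (G : SimpleGraph V) [DecidableRel G.Adj] :
    (G.adjMatrix R ^ 2).trace = 2 * G.edgeFinset.card := by
  calc (G.adjMatrix R ^ 2).trace
      = ∑ v, (G.degree v : R) := by
        simp only [sq, Matrix.trace, Matrix.diag_apply, SimpleGraph.adjMatrix_mul_self_apply_self]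
    _ = 2 * G.edgeFinset.card := by
        exact_mod_cast congrArg (Nat.cast : ℕ → R) G.sum_degrees_eq_twice_card_edges

theorem trace_exp_adjMatrix_strict_mono_general [Fintype V] [DecidableEq V]
    {G G' : SimpleGraph V} [DecidableRel G.Adj] [DecidableRel G'.Adj]
    (h : G.edgeSet ⊂ G'.edgeSet) :
    (NormedSpace.exp (G.adjMatrix ℝ)).trace < (NormedSpace.exp (G'.adjMatrix ℝ)).trace := by
  have G_le_G' : G ≤ G' := SimpleGraph.edgeSet_subset_edgeSet.mp h.subset
  have card_lt : G.edgeFinset.card < G'.edgeFinset.card :=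
    Finset.card_lt_card (Set.toFinset_ssubset_toFinset.mpr h)
  have trace_sq_lt : (G.adjMatrix ℝ ^ 2).trace < (G'.adjMatrix ℝ ^ 2).trace := by
    rw [trace_adjMatrix_sq, trace_adjMatrix_sq]
    gcongr
  exact trace_exp_lt_trace_exp (adjMatrix_apply_nonneg G)
    (adjMatrix_apply_le_adjMatrix_apply G_le_G') trace_sq_lt

end Graph

/-- If `G` and `G'` are simple graphs on the vertex set `Fin N` such that the edge set
of `G` is strictly contained in that of `G'`, then `trace (exp A) < trace (exp A')`
for their adjacency matrices, i.e. the natural connectivity strictly increases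
under the addition of edges. -/
theorem trace_exp_adjMatrix_strict_mono
    (N : ℕ) (G G' : SimpleGraph (Fin N))
    [DecidableRel G.Adj] [DecidableRel G'.Adj]
    (h : G.edgeSet ⊂ G'.edgeSet) :
    (NormedSpace.exp (G.adjMatrix ℝ)).trace <
      (NormedSpace.exp (G'.adjMatrix ℝ)).trace :=
  trace_exp_adjMatrix_strict_mono_general h
end

section
/- Fix a real number N > 0 and define, for p ∈ (0,1), R(p) = 2√(N p (1 − p)) and g(p) = N √(2/π) · e^{R(p) − N p} / R(p)^{3/2}. Then g is strictly decreasing on the set {p ∈ (0,1) : N p (1 − p) > 1}, i.e., for all p₁ < p₂ in (0,1) with N p₁(1 − p₁) > 1 and N p₂(1 − p₂) > 1, one has g(p₂) < g(p₁). -/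
open Real

/-!
Up to a positive constant, `g(p) = exp (R - N p - (3/2) log R)`. For `p < q` in `(0, 1)`,
`R(q)² - R(p)² = 4 N (q - p) (1 - p - q)` has absolute value less than `4 N (q - p)`, so it is
enough that `|φ(R(q)) - φ(R(p))| ≤ |R(q)² - R(p)²| / 4` for `φ(r) = r - (3/2) log r`. That is to say
that both `r² / 4 - φ(r)` and `r² / 4 + φ(r)` are monotone; the first is so for all `r > 0`, the
second for `r ≥ 1`, that is, as soon as `N p (1 - p) ≥ 1 / 4`.
-/

/-- The quantity `R(p) = 2 √(N p (1 - p))`, at which the Bessel function `I₁` is evaluated in the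
correction term for `G_{N,p}`. It is `0` where `N p (1 - p)` is negative. -/
noncomputable def besselArg (N p : ℝ) : ℝ :=
  2 * √(N * p * (1 - p))

section

variable {N p q a c : ℝ}

lemma besselArg_sq (h : 0 ≤ N * p * (1 - p)) : besselArg N p ^ 2 = 4 * (N * p * (1 - p)) := by
  rw [besselArg, mul_pow, sq_sqrt h]
  norm_num

lemma le_besselArg (h : c ^ 2 / 4 ≤ N * p * (1 - p)) : c ≤ besselArg N p := by
  have : c / 2 ≤ √(N * p * (1 - p)) := le_sqrt_of_sq_le (by linarith [div_pow c 2 2])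
  rw [besselArg]
  linarith

lemma besselArg_pos_iff (hN : 0 < N) : 0 < besselArg N p ↔ p ∈ Set.Ioo 0 1 := by
  rw [besselArg, mul_pos_iff_of_pos_left two_pos, sqrt_pos, mul_assoc,
    mul_pos_iff_of_pos_left hN, Set.mem_Ioo]
  constructor
  · intro h
    constructor <;> nlinarith
  · rintro ⟨hp0, hp1⟩
    exact mul_pos hp0 (sub_pos.2 hp1)

lemma abs_besselArg_sq_sub_sq_lt (hN : 0 < N) (hp : p ∈ Set.Ioo 0 1) (hq : q ∈ Set.Ioo 0 1)
    (hpq : p < q) : |besselArg N q ^ 2 - besselArg N p ^ 2| < 4 * (N * (q - p)) := by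
  have radicand_nonneg {x : ℝ} (hx : x ∈ Set.Ioo 0 1) : 0 ≤ N * x * (1 - x) :=
    mul_nonneg (mul_nonneg hN.le hx.1.le) (sub_nonneg.2 hx.2.le)
  have h_pos : 0 < 4 * (N * (q - p)) := mul_pos four_pos (mul_pos hN (sub_pos.2 hpq))
  have h_abs : |1 - (p + q)| < 1 :=
    abs_lt.2 ⟨by linarith [hp.2, hq.2], by linarith [hp.1, hq.1]⟩
  calc |besselArg N q ^ 2 - besselArg N p ^ 2|
      = |4 * (N * (q - p)) * (1 - (p + q))| := by
        rw [besselArg_sq (radicand_nonneg hq), besselArg_sq (radicand_nonneg hp)]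
        ring_nf
    _ = 4 * (N * (q - p)) * |1 - (p + q)| := by rw [abs_mul, abs_of_pos h_pos]
    _ < 4 * (N * (q - p)) := mul_lt_of_lt_one_right h_pos h_abs

lemma hasDerivAt_sub_mul_log (a : ℝ) {r : ℝ} (hr : r ≠ 0) :
    HasDerivAt (fun r ↦ r - a * log r) (1 - a / r) r :=
  (hasDerivAt_id r).sub ((hasDerivAt_log hr).const_mul a)

lemma hasDerivAt_sq_div_four (r : ℝ) : HasDerivAt (fun r : ℝ ↦ r ^ 2 / 4) (r / 2) r := by
  refine ((hasDerivAt_pow 2 r).div_const 4).congr_deriv ?_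
  norm_num
  ring

lemma monotoneOn_sq_div_four_sub (ha : 1 / 2 ≤ a) :
    MonotoneOn (fun r ↦ r ^ 2 / 4 - (r - a * log r)) (Set.Ioi 0) := by
  have h_deriv {r : ℝ} (hr : 0 < r) :
      HasDerivAt (fun r ↦ r ^ 2 / 4 - (r - a * log r)) (r / 2 - (1 - a / r)) r :=
    (hasDerivAt_sq_div_four r).sub (hasDerivAt_sub_mul_log a hr.ne')
  refine monotoneOn_of_hasDerivWithinAt_nonneg (f' := fun r ↦ r / 2 - (1 - a / r)) (convex_Ioi 0)
    (fun r hr ↦ (h_deriv hr).continuousAt.continuousWithinAt)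
    (fun r hr ↦ (h_deriv (interior_subset hr)).hasDerivWithinAt) fun r hr_mem ↦ ?_
  have hr : 0 < r := interior_subset hr_mem
  calc 0 ≤ ((r - 1) ^ 2 + (2 * a - 1)) / (2 * r) :=
        div_nonneg (add_nonneg (sq_nonneg _) (by linarith)) (by linarith)
    _ = r / 2 - (1 - a / r) := by
        field_simp
        ring

lemma monotoneOn_sq_div_four_add (hc : 0 < c) (hac : 2 * a ≤ c ^ 2 + 2 * c) :
    MonotoneOn (fun r ↦ r ^ 2 / 4 + (r - a * log r)) (Set.Ici c) := by
  have h_deriv {r : ℝ} (hr : c ≤ r) :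
      HasDerivAt (fun r ↦ r ^ 2 / 4 + (r - a * log r)) (r / 2 + (1 - a / r)) r :=
    (hasDerivAt_sq_div_four r).add (hasDerivAt_sub_mul_log a (hc.trans_le hr).ne')
  refine monotoneOn_of_hasDerivWithinAt_nonneg (f' := fun r ↦ r / 2 + (1 - a / r)) (convex_Ici c)
    (fun r hr ↦ (h_deriv hr).continuousAt.continuousWithinAt)
    (fun r hr ↦ (h_deriv (interior_subset hr)).hasDerivWithinAt) fun r hr_mem ↦ ?_
  have hcr : c ≤ r := interior_subset hr_mem
  have hr : 0 < r := hc.trans_le hcr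
  have h_num : 2 * a ≤ r ^ 2 + 2 * r := hac.trans (by gcongr)
  calc 0 ≤ (r ^ 2 + 2 * r - 2 * a) / (2 * r) := div_nonneg (sub_nonneg.2 h_num) (by linarith)
    _ = r / 2 + (1 - a / r) := by
        field_simp
        ring

lemma sub_mul_log_sub_le_abs_sq_sub_sq (ha : 1 / 2 ≤ a) (hc : 0 < c)
    (hac : 2 * a ≤ c ^ 2 + 2 * c) {r s : ℝ} (hr : c ≤ r) (hs : c ≤ s) :
    (s - a * log s) - (r - a * log r) ≤ |s ^ 2 - r ^ 2| / 4 := by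
  rcases le_total r s with hrs | hsr
  · have h_mono : r ^ 2 / 4 - (r - a * log r) ≤ s ^ 2 / 4 - (s - a * log s) :=
      monotoneOn_sq_div_four_sub ha (hc.trans_le hr) (hc.trans_le hs) hrs
    linarith [le_abs_self (s ^ 2 - r ^ 2)]
  · have h_mono : s ^ 2 / 4 + (s - a * log s) ≤ r ^ 2 / 4 + (r - a * log r) :=
      monotoneOn_sq_div_four_add hc hac hs hr hsr
    linarith [neg_le_abs (s ^ 2 - r ^ 2)]

lemma strictAntiOn_besselArg_sub_mul_log_sub (hN : 0 < N) (ha : 1 / 2 ≤ a) (hc : 0 < c)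
    (hac : 2 * a ≤ c ^ 2 + 2 * c) :
    StrictAntiOn (fun p ↦ besselArg N p - a * log (besselArg N p) - N * p)
      {p | c ≤ besselArg N p} := by
  intro p hp q hq hpq
  have h_log := sub_mul_log_sub_le_abs_sq_sub_sq ha hc hac hp hq
  have h_sq := abs_besselArg_sq_sub_sq_lt hN ((besselArg_pos_iff hN).1 (hc.trans_le hp))
    ((besselArg_pos_iff hN).1 (hc.trans_le hq)) hpq
  dsimp only
  linarith

lemma exp_div_rpow_eq_exp {r : ℝ} (hr : 0 < r) (x a : ℝ) :
    exp (r - x) / r ^ a = exp (r - a * log r - x) := by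
  rw [rpow_def_of_pos hr, ← exp_sub]
  ring_nf

lemma strictAntiOn_exp_besselArg_div_rpow (hN : 0 < N) (ha : 1 / 2 ≤ a) (hc : 0 < c)
    (hac : 2 * a ≤ c ^ 2 + 2 * c) :
    StrictAntiOn (fun p ↦ exp (besselArg N p - N * p) / besselArg N p ^ a)
      {p | c ≤ besselArg N p} :=
  (exp_strictMono.comp_strictAntiOn
    (strictAntiOn_besselArg_sub_mul_log_sub hN ha hc hac)).congr
    fun _ hp ↦ (exp_div_rpow_eq_exp (hc.trans_le hp) _ _).symm

end

theorem correction_term_strictAntiOn_general (N : ℝ) (hN : 0 < N) :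
    StrictAntiOn
      (fun p : ℝ =>
        N * Real.sqrt (2 / π) *
            Real.exp (2 * Real.sqrt (N * p * (1 - p)) - N * p) /
          (2 * Real.sqrt (N * p * (1 - p))) ^ ((3 : ℝ) / 2))
      {p : ℝ | 1 / 4 ≤ N * p * (1 - p)} := by
  intro p hp q hq hpq
  have one_le_besselArg {x : ℝ} (hx : 1 / 4 ≤ N * x * (1 - x)) : 1 ≤ besselArg N x :=
    le_besselArg (by rwa [one_pow])
  have h_lt := strictAntiOn_exp_besselArg_div_rpow (a := 3 / 2) hN (by norm_num) one_pos
    (by norm_num) (one_le_besselArg hp) (one_le_besselArg hq) hpq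
  have h_const : 0 < N * √(2 / π) := by positivity
  simpa only [besselArg, mul_div_assoc] using mul_lt_mul_of_pos_left h_lt h_const

/-- For fixed `N > 0`, the function
`g(p) = N √(2/π) · e^{R(p) − N p} / R(p)^{3/2}`, with `R(p) = 2√(N p (1 − p))`,
is strictly decreasing on `{p ∈ (0,1) : N p (1 − p) > 1}`. -/
theorem correction_term_strictAntiOn (N : ℝ) (hN : 0 < N) :
    StrictAntiOn
      (fun p : ℝ =>
        N * Real.sqrt (2 / π) *
            Real.exp (2 * Real.sqrt (N * p * (1 - p)) - N * p) /
          (2 * Real.sqrt (N * p * (1 - p))) ^ ((3 : ℝ) / 2))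
      {p : ℝ | 0 < p ∧ p < 1 ∧ 1 < N * p * (1 - p)} :=
  (correction_term_strictAntiOn_general N hN).mono fun p ⟨_, _, hp⟩ ↦
    le_trans (by norm_num) hp.le
end

section
/- Fix ε ∈ (0, 1) and define, for real N and p ∈ (0,1), R(N,p) = 2√(N p (1 − p)) and g_N(p) = N √(2/π) · e^{R(N,p) − N p} / R(N,p)^{3/2}. Then sup { g_N(p) : N^{ε−1} ln N ≤ p ≤ 1 − N^{ε−1} ln N } → 0 as N → ∞. In particular, for every δ > 0 there exists N₀ such that for all N ≥ N₀ and every p with N^{ε−1} ln N ≤ p ≤ 1 − N^{ε−1} ln N, one has g_N(p) < δ. -/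
open Real Filter

/-!
Write `x = N p`. Since `R ≤ 2 √x ≤ η x + 1 / η` for every `η > 0`, the exponential factor is at most
`exp (1 / η - (1 - η) x)`. On an interval `[a, 1 - a]` with `N a ≥ c log N` this is
`O (N ^ (-(1 - η) c))`, and `R ≥ 1`, so the denominator is harmless. If `c > 1`, then `η` can be
taken so small that `(1 - η) c > 1`, which beats the factor `N`. The constant `1` is critical: at
`N p = log N` the factor `exp (2 √x)` makes the correction term diverge.
-/

/-- The argument `R(N, p) = 2 √(N p (1 - p))` of the Bessel function `I₁` in the correction term
of the natural connectivity of the random graph `G_{N,p}`. -/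
noncomputable def besselArgument (N p : ℝ) : ℝ :=
  2 * √(N * p * (1 - p))

/-- The asymptotic form `g_N(p) = N √(2/π) e^{R - N p} R^{-3/2}` of the correction term of the
natural connectivity of `G_{N,p}`. Division by zero makes it `0` where `R = 0`, for instance at
`p = 0` and `p = 1`. -/
noncomputable def correctionTerm (N p : ℝ) : ℝ :=
  N * √(2 / π) * exp (besselArgument N p - N * p) / besselArgument N p ^ ((3 : ℝ) / 2)

theorem two_mul_sqrt_le_mul_add_inv {η x : ℝ} (hη : 0 < η) (hx : 0 ≤ x) :
    2 * √x ≤ η * x + η⁻¹ := by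
  have hsq : 0 ≤ η⁻¹ * (η * √x - 1) ^ 2 := by positivity
  have hexpand : η⁻¹ * (η * √x - 1) ^ 2 = η * √x ^ 2 - 2 * √x + η⁻¹ := by
    field_simp
    ring
  rw [hexpand, sq_sqrt hx] at hsq
  linarith

theorem half_le_mul_one_sub_of_mem_Icc {a p : ℝ} (ha : 0 ≤ a) (hp : p ∈ Set.Icc a (1 - a)) :
    a / 2 ≤ p * (1 - p) := by
  have ha_half : a ≤ 1 / 2 := by linarith [hp.1, hp.2]
  calc a / 2 ≤ a * (1 - a) := by nlinarith
    _ ≤ p * (1 - p) := by nlinarith [mul_nonneg (sub_nonneg.2 hp.1) (sub_nonneg.2 hp.2)]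

theorem tendsto_sSup_image_of_mem_Icc {ι α β : Type*} [ConditionallyCompleteLattice β]
    [TopologicalSpace β] [OrderTopology β] {l : Filter ι} {s : ι → Set α} {f : ι → α → β}
    {lo hi : ι → β} {b : β} (hlo : Tendsto lo l (nhds b)) (hhi : Tendsto hi l (nhds b))
    (hs : ∀ᶠ i in l, (s i).Nonempty) (hf : ∀ᶠ i in l, ∀ x ∈ s i, f i x ∈ Set.Icc (lo i) (hi i)) :
    Tendsto (fun i => sSup (f i '' s i)) l (nhds b) := by
  refine tendsto_of_tendsto_of_tendsto_of_le_of_le' hlo hhi ?_ ?_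
  · filter_upwards [hs, hf] with i ⟨x, hx⟩ hfi
    have hbdd : BddAbove (f i '' s i) := ⟨hi i, Set.forall_mem_image.2 fun y hy => (hfi y hy).2⟩
    exact (hfi x hx).1.trans (le_csSup hbdd (Set.mem_image_of_mem _ hx))
  · filter_upwards [hs, hf] with i hsi hfi
    exact csSup_le (hsi.image _) (Set.forall_mem_image.2 fun y hy => (hfi y hy).2)

theorem one_le_besselArgument {N p : ℝ} (h : 1 / 4 ≤ N * p * (1 - p)) :
    1 ≤ besselArgument N p := by
  have hsqrt : 1 / 2 ≤ √(N * p * (1 - p)) := le_sqrt_of_sq_le (by linarith)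
  unfold besselArgument
  linarith

theorem besselArgument_le_two_mul_sqrt {N : ℝ} (p : ℝ) (hN : 0 ≤ N) :
    besselArgument N p ≤ 2 * √(N * p) := by
  have hle : N * p * (1 - p) ≤ N * p := by linarith [mul_nonneg hN (mul_self_nonneg p)]
  exact mul_le_mul_of_nonneg_left (sqrt_le_sqrt hle) zero_le_two

theorem correctionTerm_nonneg {N : ℝ} (p : ℝ) (hN : 0 ≤ N) : 0 ≤ correctionTerm N p := by
  unfold correctionTerm besselArgument
  positivity

theorem correctionTerm_le_mul_exp {N p : ℝ} (hN : 0 ≤ N) (hR : 1 ≤ besselArgument N p) :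
    correctionTerm N p ≤ N * exp (besselArgument N p - N * p) := by
  have hpi : √(2 / π) ≤ 1 := by
    rw [sqrt_le_one, div_le_one pi_pos]
    exact two_le_pi
  calc correctionTerm N p
      ≤ N * √(2 / π) * exp (besselArgument N p - N * p) :=
        div_le_self (by positivity) (one_le_rpow hR (by norm_num))
    _ ≤ N * 1 * exp (besselArgument N p - N * p) := by gcongr
    _ = N * exp (besselArgument N p - N * p) := by rw [mul_one]

theorem correctionTerm_le_mul_rpow {N p c η : ℝ} (hN : 1 ≤ N) (hc : 0 ≤ c) (hη : 0 < η)
    (hη_one : η ≤ 1) (hp : c * log N ≤ N * p) (hR : 1 ≤ besselArgument N p) :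
    correctionTerm N p ≤ exp η⁻¹ * N ^ (1 - (1 - η) * c) := by
  have hN_pos : 0 < N := by linarith
  have hNp : 0 ≤ N * p := (mul_nonneg hc (log_nonneg hN)).trans hp
  have hexponent : besselArgument N p - N * p ≤ η⁻¹ - (1 - η) * c * log N :=
    calc besselArgument N p - N * p
        ≤ η * (N * p) + η⁻¹ - N * p := by
          gcongr
          exact (besselArgument_le_two_mul_sqrt p hN_pos.le).trans
            (two_mul_sqrt_le_mul_add_inv hη hNp)
      _ = η⁻¹ - (1 - η) * (N * p) := by ring
      _ ≤ η⁻¹ - (1 - η) * (c * log N) :=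
          sub_le_sub_left (mul_le_mul_of_nonneg_left hp (sub_nonneg.2 hη_one)) _
      _ = η⁻¹ - (1 - η) * c * log N := by ring
  calc correctionTerm N p
      ≤ N * exp (besselArgument N p - N * p) := correctionTerm_le_mul_exp hN_pos.le hR
    _ ≤ N * exp (η⁻¹ - (1 - η) * c * log N) := by gcongr
    _ = exp η⁻¹ * N ^ (1 - (1 - η) * c) := by
        rw [exp_sub, rpow_sub hN_pos, rpow_one, rpow_def_of_pos hN_pos, mul_comm (log N)]
        ring

theorem one_le_besselArgument_of_mem_Icc {N a p : ℝ} (hN : 0 < N) (ha : 1 / 2 ≤ N * a)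
    (hp : p ∈ Set.Icc a (1 - a)) : 1 ≤ besselArgument N p := by
  have ha_nonneg : 0 ≤ a := (pos_of_mul_pos_right (by linarith) hN.le).le
  refine one_le_besselArgument ?_
  calc 1 / 4 ≤ N * (a / 2) := by linarith
    _ ≤ N * (p * (1 - p)) := by gcongr; exact half_le_mul_one_sub_of_mem_Icc ha_nonneg hp
    _ = N * p * (1 - p) := by ring

theorem eventually_correctionTerm_mem_Icc {a : ℝ → ℝ} {c η : ℝ} (hc : 0 < c) (hη : 0 < η)
    (hη_one : η ≤ 1) (ha : ∀ᶠ N in atTop, c * log N ≤ N * a N) :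
    ∀ᶠ N in atTop, ∀ p ∈ Set.Icc (a N) (1 - a N),
      correctionTerm N p ∈ Set.Icc 0 (exp η⁻¹ * N ^ (1 - (1 - η) * c)) := by
  filter_upwards [ha, eventually_ge_atTop 1, tendsto_log_atTop.eventually_ge_atTop (1 / 2 / c)]
    with N haN hN hlog p hp
  have hN_pos : 0 < N := by linarith
  have hNp : c * log N ≤ N * p := haN.trans (by gcongr; exact hp.1)
  have hhalf : 1 / 2 ≤ N * a N := ((div_le_iff₀' hc).1 hlog).trans haN
  have hR : 1 ≤ besselArgument N p := one_le_besselArgument_of_mem_Icc hN_pos hhalf hp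
  exact ⟨correctionTerm_nonneg p hN_pos.le,
    correctionTerm_le_mul_rpow hN hc.le hη hη_one hNp hR⟩

theorem correction_term_sup_tendsto_zero_general {a : ℝ → ℝ} {c : ℝ} (hc : 1 < c)
    (ha : ∀ᶠ N in atTop, c * log N ≤ N * a N) (ha_half : ∀ᶠ N in atTop, a N ≤ 1 / 2) :
    Tendsto (fun N => sSup (correctionTerm N '' Set.Icc (a N) (1 - a N))) atTop (nhds 0) ∧
      ∀ δ : ℝ, 0 < δ → ∃ N₀ : ℝ, ∀ N : ℝ, N₀ ≤ N →
        ∀ p ∈ Set.Icc (a N) (1 - a N), correctionTerm N p < δ := by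
  obtain ⟨η, hη, hη_lt⟩ : ∃ η, 0 < η ∧ η < 1 - c⁻¹ :=
    exists_between (sub_pos.2 (inv_lt_one_of_one_lt₀ hc))
  have hc_pos : 0 < c := zero_lt_one.trans hc
  have hη_one : η ≤ 1 := by linarith [inv_pos.2 hc_pos]
  have hexponent : 0 < (1 - η) * c - 1 := by
    rw [sub_pos, ← inv_lt_iff_one_lt_mul₀ hc_pos]
    linarith
  have hbound := eventually_correctionTerm_mem_Icc hc_pos hη hη_one ha
  have hlim : Tendsto (fun N : ℝ => exp η⁻¹ * N ^ (1 - (1 - η) * c)) atTop (nhds 0) := by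
    simpa using (tendsto_rpow_neg_atTop hexponent).const_mul (exp η⁻¹)
  have hne : ∀ᶠ N in atTop, (Set.Icc (a N) (1 - a N)).Nonempty :=
    ha_half.mono fun N hN => Set.nonempty_Icc.2 (by linarith)
  refine ⟨tendsto_sSup_image_of_mem_Icc tendsto_const_nhds hlim hne hbound, fun δ hδ => ?_⟩
  refine eventually_atTop.1 ?_
  filter_upwards [hbound, hlim.eventually_lt_const hδ] with N hN hNδ p hp
  exact (hN p hp).2.trans_lt hNδ

theorem eventually_mul_log_le_mul_rpow_sub_one_mul_log {ε : ℝ} (c : ℝ) (hε : 0 < ε) :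
    ∀ᶠ N : ℝ in atTop, c * log N ≤ N * (N ^ (ε - 1) * log N) := by
  filter_upwards [eventually_ge_atTop 1, (tendsto_rpow_atTop hε).eventually_ge_atTop c]
    with N hN hNε
  have hN_pos : 0 < N := by linarith
  calc c * log N ≤ N ^ ε * log N := by gcongr; exact log_nonneg hN
    _ = N * (N ^ (ε - 1) * log N) := by rw [rpow_sub_one hN_pos.ne']; field_simp

theorem tendsto_rpow_sub_one_mul_log_atTop {ε : ℝ} (hε : ε < 1) :
    Tendsto (fun N : ℝ => N ^ (ε - 1) * log N) atTop (nhds 0) := by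
  refine (isLittleO_log_rpow_atTop (sub_pos.2 hε)).tendsto_div_nhds_zero.congr' ?_
  filter_upwards [eventually_ge_atTop 0] with N hN
  rw [← neg_sub 1 ε, rpow_neg hN, div_eq_inv_mul]

/-- Fix `ε ∈ (0,1)` and let `g_N(p) = N √(2/π) e^{R − N p} / R^{3/2}` with
`R = R(N,p) = 2√(N p (1 − p))`. Then
`sup { g_N(p) : N^{ε−1} ln N ≤ p ≤ 1 − N^{ε−1} ln N } → 0` as `N → ∞`.
In particular, for every `δ > 0` there is `N₀` such that for all `N ≥ N₀` and every `p`
in that interval, `g_N(p) < δ`. -/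
theorem correction_term_sup_tendsto_zero (ε : ℝ) (hε : 0 < ε) (hε1 : ε < 1) :
    Tendsto
      (fun N : ℝ =>
        sSup
          ((fun p : ℝ =>
              N * Real.sqrt (2 / π) *
                  Real.exp (2 * Real.sqrt (N * p * (1 - p)) - N * p) /
                (2 * Real.sqrt (N * p * (1 - p))) ^ ((3 : ℝ) / 2)) ''
            Set.Icc (N ^ (ε - 1) * Real.log N) (1 - N ^ (ε - 1) * Real.log N)))
      atTop (nhds 0) ∧
    ∀ δ : ℝ, 0 < δ → ∃ N₀ : ℝ, ∀ N : ℝ, N₀ ≤ N →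
      ∀ p ∈ Set.Icc (N ^ (ε - 1) * Real.log N) (1 - N ^ (ε - 1) * Real.log N),
        N * Real.sqrt (2 / π) *
            Real.exp (2 * Real.sqrt (N * p * (1 - p)) - N * p) /
          (2 * Real.sqrt (N * p * (1 - p))) ^ ((3 : ℝ) / 2) < δ := by
  exact correction_term_sup_tendsto_zero_general one_lt_two
    (eventually_mul_log_le_mul_rpow_sub_one_mul_log 2 hε)
    ((tendsto_rpow_sub_one_mul_log_atTop hε1).eventually_le_const one_half_pos)
end
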